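/- arXiv:1702.05702 — 5 statements merged into one kernel-verified Lean document; each statement's English description precedes it below -/
import Mathlib

section
/- Let X ⊆ ℝ^N be convex compact, let f : ℝ^N → ℝ be convex with a fixed subgradient selection ∇f, and suppose the curvature constant of f over X is at most C < ∞. Let x' ∈ X, γ ∈ (0,1], let z ∈ argmin_{z'∈X} ⟨∇f(x'), z'⟩, and set x'' = (1−γ)x' + γz. Then for every x ∈ X: f(x'') ≤ (1−γ) f(x') + γ f(x) + γ² C. -/
open Matrix Finset

/-- one-step descent inequality for the Frank–Wolfe algorithm under a
curvature constant bound. -/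
theorem frankWolfe_one_step_descent {N : ℕ}
    (X : Set (Fin N → ℝ)) (hXconv : Convex ℝ X) (hXcomp : IsCompact X)
    (f : (Fin N → ℝ) → ℝ) (hfconv : ConvexOn ℝ Set.univ f)
    (gf : (Fin N → ℝ) → (Fin N → ℝ))
    (hsub : ∀ u v : Fin N → ℝ, f u + (v - u) ⬝ᵥ gf u ≤ f v)
    (C : ℝ)
    (hcurv : ∀ x ∈ X, ∀ s ∈ X, ∀ α : ℝ, 0 < α → α ≤ 1 →
      f ((1 - α) • x + α • s) - f x - α * ((s - x) ⬝ᵥ gf x) ≤ α ^ 2 * C)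
    (x' : Fin N → ℝ) (hx' : x' ∈ X)
    (γ : ℝ) (hγ0 : 0 < γ) (hγ1 : γ ≤ 1)
    (z : Fin N → ℝ) (hzX : z ∈ X)
    (hzmin : ∀ w ∈ X, (gf x') ⬝ᵥ z ≤ (gf x') ⬝ᵥ w)
    (x'' : Fin N → ℝ) (hx'' : x'' = (1 - γ) • x' + γ • z) :
    ∀ x ∈ X, f x'' ≤ (1 - γ) * f x' + γ * f x + γ ^ 2 * C := by
  intro x hx
  have hcurv_z := hcurv x' hx' z hzX γ hγ0 hγ1
  rw [← hx''] at hcurv_z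
  have hsub_x := hsub x' x
  have hmin_x := hzmin x hx
  rw [dotProduct_comm (gf x') z, dotProduct_comm (gf x') x] at hmin_x
  rw [sub_dotProduct] at hcurv_z hsub_x
  -- Minimality of `z` followed by the subgradient inequality at `x'`.
  have hlin : z ⬝ᵥ gf x' - x' ⬝ᵥ gf x' ≤ f x - f x' := by linarith
  have hscaled := mul_le_mul_of_nonneg_left hlin hγ0.le
  linarith
end

section
/- Fix n > 2. Let 𝒜_1,…,𝒜_m ⊆ {1,…,n} be assortments with |𝒜_{j₀}| ≥ 2 for at least one j₀, N = Σ_{j=1}^m |𝒜_j|, and let X ⊆ ℝ^N be the ranking polytope. Let w_1,…,w_m > 0 and let p ∈ X satisfy p_{ij} > 0 for every pair i ∈ 𝒜_j. Define D(x) := Σ_{j=1}^m w_j Σ_{i∈𝒜_j} p_{ij} log(p_{ij}/x_{ij}) on vectors x with positive coordinates. Then the curvature constant of D over X is infinite: sup { α^{-2} ( D((1−α)x+αs) − D(x) − α⟨s−x, ∇D(x)⟩ ) : x, s ∈ X, α ∈ (0,1), all coordinates of x and of (1−α)x+αs positive } = +∞. -/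
/-!
At any `x` and `s` with positive coordinates, the Bregman-type remainder
`D(z) - D(x) - α⟨s - x, ∇D(x)⟩` with `z = (1 - α) x + α s` is the sum over all pairs of
`w_j p_{ij} (y - 1 - log y)` where `y = z_{ij} / x_{ij}`, and each summand is nonnegative.
Fix `α = 1/2` and `s = p`, and let `x = (1 - ε) v + ε p`, where `v` is a vertex with a zero entry at
some pair; such a vertex exists because some assortment has two distinct items, which cannot both
be ranked first. At that pair `y = (1 + 1/ε) / 2`, so the corresponding summand, and with it the
remainder, tends to infinity as `ε → 0`.
-/

open scoped Classical

/-- The vertex of the ranking polytope associated with a ranking `σ`: for a pair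
`i ∈ 𝒜_j` (encoded as an element of the sigma type), the entry is `1` iff `i` is the
highest ranked (σ-smallest) item of the assortment `𝒜_j`. -/
noncomputable def rankVec {n m : ℕ} (A : Fin m → Finset (Fin n))
    (σ : Equiv.Perm (Fin n)) : ((j : Fin m) × {i : Fin n // i ∈ A j}) → ℝ :=
  fun idx => if ∀ i' ∈ A idx.1, σ idx.2.1 ≤ σ i' then 1 else 0

/-- The ranking polytope `X = conv { a(σ) : σ ∈ S_n }`. -/
noncomputable def rankPolytope {n m : ℕ} (A : Fin m → Finset (Fin n)) :
    Set (((j : Fin m) × {i : Fin n // i ∈ A j}) → ℝ) :=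
  convexHull ℝ {v | ∃ σ : Equiv.Perm (Fin n), v = rankVec A σ}

/-- The weighted sum of Kullback–Leibler divergences
`D(x) = Σ_j w_j Σ_{i ∈ 𝒜_j} p_{ij} log (p_{ij} / x_{ij})`. -/
noncomputable def wKL {n m : ℕ} {A : Fin m → Finset (Fin n)} (w : Fin m → ℝ)
    (p x : ((j : Fin m) × {i : Fin n // i ∈ A j}) → ℝ) : ℝ :=
  ∑ idx : (j : Fin m) × {i : Fin n // i ∈ A j},
    w idx.1 * (p idx * Real.log (p idx / x idx))

/-- The gradient of `wKL w p` at a point `x` with positive coordinates. -/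
noncomputable def wKLgrad {n m : ℕ} {A : Fin m → Finset (Fin n)} (w : Fin m → ℝ)
    (p x : ((j : Fin m) × {i : Fin n // i ∈ A j}) → ℝ) :
    ((j : Fin m) × {i : Fin n // i ∈ A j}) → ℝ :=
  fun idx => -(w idx.1 * p idx / x idx)

/-- One coordinate of the remainder `D(z) - D(x) - ⟨s - x, ∇D(x)⟩ / 2` at the midpoint
`z` of `x` and `s`, written in terms of the ratio `z / x`. -/
lemma wKL_remainder_term (W p x s z : ℝ) (hp : 0 < p) (hx : 0 < x) (hs : 0 < s)
    (hz : z = (x + s) / 2) :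
    W * (p * Real.log (p / z)) - W * (p * Real.log (p / x))
      - 1 / 2 * ((s - x) * (-(W * p / x))) = W * p * (z / x - 1 - Real.log (z / x)) := by
  have hz0 : 0 < z := by rw [hz]; positivity
  rw [Real.log_div hp.ne' hz0.ne', Real.log_div hp.ne' hx.ne', Real.log_div hz0.ne' hx.ne', hz]
  field_simp
  ring

lemma half_sub_one_le_sub_log (y : ℝ) (hy : 0 < y) : y / 2 - 1 ≤ y - 1 - Real.log y := by
  have h1 := Real.log_le_sub_one_of_pos (half_pos hy)
  have h2 := Real.log_le_sub_one_of_pos (zero_lt_two (α := ℝ))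
  rw [Real.log_div hy.ne' two_ne_zero] at h1
  linarith

lemma rankVec_nonneg {n m : ℕ} (A : Fin m → Finset (Fin n)) (σ : Equiv.Perm (Fin n))
    (idx : (j : Fin m) × {i : Fin n // i ∈ A j}) : 0 ≤ rankVec A σ idx := by
  unfold rankVec
  split_ifs <;> norm_num

lemma exists_rankVec_eq_zero {n m : ℕ} (A : Fin m → Finset (Fin n))
    (hA : ∃ j₀ : Fin m, 2 ≤ (A j₀).card) (σ : Equiv.Perm (Fin n)) :
    ∃ idx, rankVec A σ idx = 0 := by
  obtain ⟨j, hj⟩ := hA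
  obtain ⟨a, ha, b, hb, hab⟩ := Finset.one_lt_card.mp hj
  have hne : σ a ≠ σ b := fun h => hab (σ.injective h)
  rcases lt_or_gt_of_ne hne with h | h
  · exact ⟨⟨j, b, hb⟩, if_neg fun H => absurd (H a ha) (not_le.mpr h)⟩
  · exact ⟨⟨j, a, ha⟩, if_neg fun H => absurd (H b hb) (not_le.mpr h)⟩

/-- for `n > 2`, positive weights and a point `p` of the ranking polytope
with positive coordinates, the weighted KL-divergence distance has infinite curvature
constant over the ranking polytope (the supremum being taken over the points where the
divergence is defined, i.e., with positive coordinates). -/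
theorem wKL_infinite_curvature {n m : ℕ} (hn : 2 < n)
    (A : Fin m → Finset (Fin n)) (hA : ∃ j₀ : Fin m, 2 ≤ (A j₀).card)
    (w : Fin m → ℝ) (hw : ∀ j, 0 < w j)
    (p : ((j : Fin m) × {i : Fin n // i ∈ A j}) → ℝ)
    (hpX : p ∈ rankPolytope A) (hppos : ∀ idx, 0 < p idx) :
    ∀ Cbound : ℝ, ∃ x ∈ rankPolytope A, ∃ s ∈ rankPolytope A, ∃ α : ℝ,
      0 < α ∧ α < 1 ∧ (∀ idx, 0 < x idx) ∧ (∀ idx, 0 < ((1 - α) • x + α • s) idx) ∧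
      Cbound < (1 / α ^ 2) *
        (wKL w p ((1 - α) • x + α • s) - wKL w p x
          - α * ∑ idx, (s idx - x idx) * wKLgrad w p x idx) := by
  intro C
  obtain ⟨k, hk⟩ := exists_rankVec_eq_zero A hA 1
  have hc : 0 < w k.1 * p k := mul_pos (hw _) (hppos _)
  -- With `c = w p` at the pair `k`, the objective is at least `c (T - 3)` where `T = 1 / ε`.
  obtain ⟨T, hT⟩ : ∃ T : ℝ, T = 4 + |C| / (w k.1 * p k) := ⟨_, rfl⟩
  have hT4 : 4 ≤ T := by
    have : 0 ≤ |C| / (w k.1 * p k) := by positivity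
    linarith
  have hT0 : 0 < T := by linarith
  have hTinv : T⁻¹ < 1 := inv_lt_one_of_one_lt₀ (by linarith)
  have hTinv0 : 0 < T⁻¹ := inv_pos.mpr hT0
  have hTC : C < w k.1 * p k * (T - 3) := by
    have : w k.1 * p k * (T - 3) = w k.1 * p k + |C| := by
      have := mul_div_cancel₀ |C| hc.ne'
      rw [hT]
      linear_combination this
    linarith [le_abs_self C]
  obtain ⟨x, hxdef⟩ : ∃ x, x = (1 - T⁻¹) • rankVec A 1 + T⁻¹ • p := ⟨_, rfl⟩
  have hxX : x ∈ rankPolytope A := by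
    rw [hxdef]
    have hv : rankVec A 1 ∈ rankPolytope A := subset_convexHull ℝ _ ⟨1, rfl⟩
    exact convex_convexHull ℝ _ hv hpX (by linarith) hTinv0.le
      (by ring)
  have hx : ∀ idx, 0 < x idx := by
    intro idx
    have h1 : 0 ≤ (1 - T⁻¹) * rankVec A 1 idx :=
      mul_nonneg (by linarith) (rankVec_nonneg A 1 idx)
    have h2 : 0 < T⁻¹ * p idx := mul_pos hTinv0 (hppos idx)
    simp only [hxdef, Pi.add_apply, Pi.smul_apply, smul_eq_mul]
    linarith
  obtain ⟨z, hzdef⟩ : ∃ z, z = (1 - (1 / 2 : ℝ)) • x + (1 / 2 : ℝ) • p := ⟨_, rfl⟩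
  have hz : ∀ idx, z idx = (x idx + p idx) / 2 := by
    intro idx
    simp only [hzdef, Pi.add_apply, Pi.smul_apply, smul_eq_mul]
    ring
  have hzpos : ∀ idx, 0 < z idx := by
    intro idx
    rw [hz]
    linarith [hx idx, hppos idx]
  refine ⟨x, hxX, p, hpX, 1 / 2, by norm_num, by norm_num, hx, ?_, ?_⟩
  · rw [← hzdef]
    exact hzpos
  rw [← hzdef]
  have hsum : wKL w p z - wKL w p x - 1 / 2 * ∑ idx, (p idx - x idx) * wKLgrad w p x idx
      = ∑ idx, w idx.1 * p idx * (z idx / x idx - 1 - Real.log (z idx / x idx)) := by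
    unfold wKL wKLgrad
    rw [Finset.mul_sum, ← Finset.sum_sub_distrib, ← Finset.sum_sub_distrib]
    exact Finset.sum_congr rfl fun idx _ =>
      wKL_remainder_term _ _ _ _ _ (hppos idx) (hx idx) (hppos idx) (hz idx)
  have hterm : w k.1 * p k * (z k / x k - 1 - Real.log (z k / x k))
      ≤ ∑ idx, w idx.1 * p idx * (z idx / x idx - 1 - Real.log (z idx / x idx)) := by
    refine Finset.single_le_sum
      (f := fun idx => w idx.1 * p idx * (z idx / x idx - 1 - Real.log (z idx / x idx)))
      (fun idx _ => ?_) (Finset.mem_univ k)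
    have := Real.log_le_sub_one_of_pos (div_pos (hzpos idx) (hx idx))
    exact mul_nonneg (mul_pos (hw _) (hppos _)).le (by linarith)
  have hratio : z k / x k = (1 + T) / 2 := by
    have hxk : x k = T⁻¹ * p k := by
      simp only [hxdef, Pi.add_apply, Pi.smul_apply, smul_eq_mul, hk]
      ring
    have := hppos k
    rw [hz, hxk]
    field_simp
  have hlow := mul_le_mul_of_nonneg_left
    (half_sub_one_le_sub_log _ (div_pos (hzpos k) (hx k))) hc.le
  rw [hsum]
  rw [hratio] at hlow hterm
  norm_num
  linarith
end

section
/- Let ‖·‖ be a norm on ℝ^N with dual norm ‖·‖_*, let f : ℝ^N → ℝ be convex and differentiable with L-Lipschitz gradient, i.e., ‖∇f(u) − ∇f(v)‖_* ≤ L‖u − v‖ for all u, v, and let X ⊆ ℝ^N be convex and compact with diameter R = max_{x,x'∈X} ‖x − x'‖. Then the curvature constant of f over X satisfies C_f ≤ L R². -/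
/-!
For `y = (1 - α) x + α s`, convexity places the tangent plane at `y` below `f`, so
`f y - f x ≤ ⟪y - x, ∇f y⟫`. Hence the curvature term is at most `⟪y - x, ∇f y - ∇f x⟫`,
which by duality and the Lipschitz bound is at most
`L ‖y - x‖² = α² L ‖s - x‖² ≤ α² L R²`.

The dual norm is written as a real `sSup`, so the duality step needs the defining set to be
bounded above; this follows from the equivalence of norms in finite dimension
(`exists_norm_le_mul_nrm`).
-/

open scoped RealInnerProductSpace

/-- Every norm on `ℝ^N` dominates a positive multiple of the Euclidean norm: it is convex, hence
continuous, hence attains a positive minimum on the Euclidean unit sphere. -/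
lemma exists_norm_le_mul_nrm {N : ℕ}
    (nrm : EuclideanSpace ℝ (Fin N) → ℝ)
    (hnonneg : ∀ u, 0 ≤ nrm u)
    (hdefinite : ∀ u, nrm u = 0 → u = 0)
    (hhom : ∀ (c : ℝ) u, nrm (c • u) = |c| * nrm u)
    (htri : ∀ u v, nrm (u + v) ≤ nrm u + nrm v) :
    ∃ C : ℝ, 0 ≤ C ∧ ∀ w, ‖w‖ ≤ C * nrm w := by
  have hconv : ConvexOn ℝ Set.univ nrm := by
    refine ⟨convex_univ, fun x _ y _ a b ha hb _ => ?_⟩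
    calc nrm (a • x + b • y) ≤ nrm (a • x) + nrm (b • y) := htri _ _
      _ = a • nrm x + b • nrm y := by
        rw [hhom, hhom, abs_of_nonneg ha, abs_of_nonneg hb, smul_eq_mul, smul_eq_mul]
  have hcont : Continuous nrm :=
    continuousOn_univ.1 (hconv.continuousOn isOpen_univ)
  rcases (Metric.sphere (0 : EuclideanSpace ℝ (Fin N)) 1).eq_empty_or_nonempty with he | hne
  · -- An empty unit sphere means `N = 0`, where every vector vanishes.
    refine ⟨0, le_rfl, fun w => ?_⟩
    by_contra! hw
    have hw0 : ‖w‖ ≠ 0 := by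
      rw [zero_mul] at hw
      exact hw.ne'
    have hmem : ‖w‖⁻¹ • w ∈ Metric.sphere (0 : EuclideanSpace ℝ (Fin N)) 1 := by
      simp [norm_smul, hw0]
    rw [he] at hmem
    exact hmem
  · obtain ⟨z, hz, hmin⟩ :=
      (isCompact_sphere (0 : EuclideanSpace ℝ (Fin N)) 1).exists_isMinOn hne hcont.continuousOn
    have hz1 : ‖z‖ = 1 := by simpa using hz
    have hzpos : 0 < nrm z := by
      refine lt_of_le_of_ne (hnonneg z) fun h => ?_
      rw [hdefinite z h.symm, norm_zero] at hz1
      exact zero_ne_one hz1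
    refine ⟨(nrm z)⁻¹, by positivity, fun w => ?_⟩
    by_cases hw : ‖w‖ = 0
    · rw [hw]
      exact mul_nonneg (by positivity) (hnonneg w)
    have hmem : ‖w‖⁻¹ • w ∈ Metric.sphere (0 : EuclideanSpace ℝ (Fin N)) 1 := by
      simp [norm_smul, hw]
    have h : nrm z ≤ nrm (‖w‖⁻¹ • w) := hmin hmem
    have hwpos : 0 < ‖w‖ := lt_of_le_of_ne (norm_nonneg w) (Ne.symm hw)
    rw [hhom, abs_of_pos (inv_pos.2 hwpos), inv_mul_eq_div, le_div_iff₀ hwpos] at h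
    rw [inv_mul_eq_div, le_div_iff₀ hzpos]
    linarith

/-- The pairing inequality `⟪d, g⟫ ≤ ‖g‖_* ‖d‖`. -/
lemma inner_le_sSup_mul_nrm {N : ℕ}
    (nrm : EuclideanSpace ℝ (Fin N) → ℝ)
    (hnonneg : ∀ u, 0 ≤ nrm u)
    (hdefinite : ∀ u, nrm u = 0 → u = 0)
    (hhom : ∀ (c : ℝ) u, nrm (c • u) = |c| * nrm u)
    (htri : ∀ u v, nrm (u + v) ≤ nrm u + nrm v)
    (d g : EuclideanSpace ℝ (Fin N)) :
    ⟪d, g⟫ ≤ sSup {r : ℝ | ∃ w, nrm w ≤ 1 ∧ r = ⟪w, g⟫} * nrm d := by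
  obtain ⟨C, hC, hbound⟩ := exists_norm_le_mul_nrm nrm hnonneg hdefinite hhom htri
  have hbdd : BddAbove {r : ℝ | ∃ w, nrm w ≤ 1 ∧ r = ⟪w, g⟫} := by
    refine ⟨C * ‖g‖, ?_⟩
    rintro r ⟨w, hw, rfl⟩
    calc ⟪w, g⟫ ≤ ‖w‖ * ‖g‖ := real_inner_le_norm w g
      _ ≤ C * ‖g‖ := by
        gcongr
        exact (hbound w).trans (mul_le_of_le_one_right hC hw)
  by_cases hd : nrm d = 0
  · rw [hd, hdefinite d hd, inner_zero_left, mul_zero]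
  have hdpos : 0 < nrm d := lt_of_le_of_ne (hnonneg d) (Ne.symm hd)
  have h := le_csSup hbdd (a := ⟪(nrm d)⁻¹ • d, g⟫)
    ⟨_, by rw [hhom, abs_of_pos (inv_pos.2 hdpos), inv_mul_cancel₀ hd], rfl⟩
  rw [real_inner_smul_left, inv_mul_eq_div, div_le_iff₀ hdpos] at h
  exact h

/-- A differentiable convex function lies above its tangent plane at `y`. -/
lemma sub_le_inner_gradient {N : ℕ} {f : EuclideanSpace ℝ (Fin N) → ℝ}
    (hfconv : ConvexOn ℝ Set.univ f) {g y : EuclideanSpace ℝ (Fin N)}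
    (hg : HasGradientAt f g y) (x : EuclideanSpace ℝ (Fin N)) :
    f y - f x ≤ ⟪y - x, g⟫ := by
  have hconv : ConvexOn ℝ Set.univ (f ∘ (AffineMap.lineMap y x : ℝ →ᵃ[ℝ] _)) :=
    hfconv.comp_affineMap (AffineMap.lineMap y x)
  have hg' : HasFDerivAt f (InnerProductSpace.toDual ℝ _ g)
      ((AffineMap.lineMap y x : ℝ →ᵃ[ℝ] _) 0) := by
    rw [AffineMap.lineMap_apply_zero]
    exact hg.hasFDerivAt
  have hderiv := hg'.comp_hasDerivAt (0 : ℝ) AffineMap.hasDerivAt_lineMap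
  have h := hconv.le_slope_of_hasDerivAt (Set.mem_univ 0) (Set.mem_univ 1) zero_lt_one hderiv
  simp only [slope_def_field, Function.comp_apply, AffineMap.lineMap_apply_zero,
    AffineMap.lineMap_apply_one, InnerProductSpace.toDual_apply_apply, sub_zero, div_one] at h
  rw [← neg_sub x y, inner_neg_left, real_inner_comm]
  linarith

/-- a convex differentiable function with `L`-Lipschitz gradient
(measured in an arbitrary norm `nrm` and its dual norm) has curvature constant over a
convex compact set `X` of diameter `R` bounded by `L R²`. -/
theorem curvature_le_of_lipschitz_gradient {N : ℕ}
    (nrm : EuclideanSpace ℝ (Fin N) → ℝ)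
    (hnonneg : ∀ u, 0 ≤ nrm u)
    (hdefinite : ∀ u, nrm u = 0 → u = 0)
    (hhom : ∀ (c : ℝ) u, nrm (c • u) = |c| * nrm u)
    (htri : ∀ u v, nrm (u + v) ≤ nrm u + nrm v)
    (f : EuclideanSpace ℝ (Fin N) → ℝ) (hfconv : ConvexOn ℝ Set.univ f)
    (gradf : EuclideanSpace ℝ (Fin N) → EuclideanSpace ℝ (Fin N))
    (hgrad : ∀ u, HasGradientAt f (gradf u) u)
    (L : ℝ) (hL : 0 ≤ L)
    (hLip : ∀ u v, sSup {r : ℝ | ∃ w, nrm w ≤ 1 ∧ r = ⟪w, gradf u - gradf v⟫}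
      ≤ L * nrm (u - v))
    (X : Set (EuclideanSpace ℝ (Fin N))) (hXconv : Convex ℝ X) (hXcomp : IsCompact X)
    (R : ℝ) (hR : IsGreatest {r : ℝ | ∃ x ∈ X, ∃ x' ∈ X, r = nrm (x - x')} R) :
    ∀ x ∈ X, ∀ s ∈ X, ∀ α : ℝ, 0 < α → α ≤ 1 →
      f ((1 - α) • x + α • s) - f x - α * ⟪s - x, gradf x⟫ ≤ α ^ 2 * (L * R ^ 2) := by
  intro x hx s hs α hα _
  set y := (1 - α) • x + α • s with hy
  have hyx : y - x = α • (s - x) := by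
    rw [hy]
    module
  have htangent := sub_le_inner_gradient hfconv (hgrad y) x
  have hpair : ⟪y - x, gradf y - gradf x⟫ ≤ L * nrm (y - x) * nrm (y - x) :=
    (inner_le_sSup_mul_nrm nrm hnonneg hdefinite hhom htri _ _).trans
      (mul_le_mul_of_nonneg_right (hLip y x) (hnonneg _))
  have hdiam : nrm (s - x) ≤ R := hR.2 ⟨s, hs, x, hx, rfl⟩
  have hlin : ⟪y - x, gradf x⟫ = α * ⟪s - x, gradf x⟫ := by
    rw [hyx, real_inner_smul_left]
  have hsq : nrm (s - x) ^ 2 ≤ R ^ 2 := pow_le_pow_left₀ (hnonneg _) hdiam 2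
  rw [inner_sub_right, hlin] at hpair
  calc f y - f x - α * ⟪s - x, gradf x⟫
      ≤ L * nrm (y - x) * nrm (y - x) := by linarith
    _ = α ^ 2 * (L * nrm (s - x) ^ 2) := by
      rw [hyx, hhom, abs_of_pos hα]
      ring
    _ ≤ α ^ 2 * (L * R ^ 2) := by gcongr
end

section
/- Let ‖·‖ be a norm on ℝ^N such that h(u) := (1/2)‖u‖² is differentiable with 1-Lipschitz gradient (‖∇h(u) − ∇h(v)‖_* ≤ ‖u − v‖ for all u,v). Let X ⊆ ℝ^N be convex compact with diameter R = max_{x,x'∈X}‖x − x'‖, let p ∈ ℝ^N, and run the Frank–Wolfe iterates on D(x) = (1/2)‖x − p‖² over X with step sizes γ^t = 2/(t+1): z^t ∈ argmin_{z∈X}⟨∇D(x^t), z⟩, x^{t+1} = (1−γ^t)x^t + γ^t z^t. Then for every T ≥ 4: ‖x^T − p‖² ≤ min_{x∈X}‖x − p‖² + 8R²/T, and consequently ‖x^T − p‖ − min_{x∈X}‖x − p‖ ≤ 2√2·R/√T. -/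
/-!
With `h = ‖·‖²/2`, convexity gives `h u + ⟪∇h u, d⟫ ≤ h (u + d)` and the Lipschitz gradient gives
the descent inequality `h (u + d) ≤ h u + ⟪∇h u, d⟫ + ‖d‖²/2`
(`halfSq_gradient_inequality`, `halfSq_descent`). Applied to `D(x) = h (x - p)` with
`d = γ (z - x)`, and using the minimality of `z`, they yield for the gap
`δ_t = D(x^t) - D(x*)` the recursion `δ_{t+1} ≤ (1 - γ) δ_t + γ² R²/2`. As `γ^1 = 1` wipes out the
initial gap, induction from `t = 2` gives `δ_t ≤ 2R²/(t+1)`, which is stronger than the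
claimed `4R²/t`. The bound on the unsquared norms follows from `a² ≤ b² + c² → a ≤ b + c`.
-/

open scoped RealInnerProductSpace

section Aux

variable {N : ℕ} {nrm : EuclideanSpace ℝ (Fin N) → ℝ}
  {gradh : EuclideanSpace ℝ (Fin N) → EuclideanSpace ℝ (Fin N)}

lemma halfSq_convexOn (hnonneg : ∀ u, 0 ≤ nrm u)
    (hhom : ∀ (c : ℝ) u, nrm (c • u) = |c| * nrm u)
    (htri : ∀ u v, nrm (u + v) ≤ nrm u + nrm v) :
    ConvexOn ℝ Set.univ (fun w => (1 / 2) * nrm w ^ 2) := by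
  refine ⟨convex_univ, fun u _ v _ a b ha hb hab => ?_⟩
  have h1 : nrm (a • u + b • v) ≤ a * nrm u + b * nrm v := by
    have := htri (a • u) (b • v)
    rwa [hhom, hhom, abs_of_nonneg ha, abs_of_nonneg hb] at this
  have h2 : nrm (a • u + b • v) ^ 2 ≤ (a * nrm u + b * nrm v) ^ 2 :=
    pow_le_pow_left₀ (hnonneg _) h1 2
  have hb' : b = 1 - a := by linarith
  subst hb'
  simp only [smul_eq_mul]
  nlinarith [mul_nonneg (mul_nonneg ha hb) (sq_nonneg (nrm u - nrm v))]

lemma hasDerivAt_line {f : EuclideanSpace ℝ (Fin N) → ℝ}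
    (hgrad : ∀ u, HasGradientAt f (gradh u) u)
    (u d : EuclideanSpace ℝ (Fin N)) (s : ℝ) :
    HasDerivAt (fun s : ℝ => f (u + s • d)) ⟪gradh (u + s • d), d⟫ s := by
  have h1 : HasDerivAt (fun s : ℝ => u + s • d) d s := by
    simpa using ((hasDerivAt_id s).smul_const d).const_add u
  have h2 := (hgrad (u + s • d)).hasFDerivAt.comp_hasDerivAt s h1
  simpa [Function.comp_def] using h2

/-- A convex function lies above its tangent planes. -/
lemma halfSq_gradient_inequality (hnonneg : ∀ u, 0 ≤ nrm u)
    (hhom : ∀ (c : ℝ) u, nrm (c • u) = |c| * nrm u)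
    (htri : ∀ u v, nrm (u + v) ≤ nrm u + nrm v)
    (hgradh : ∀ u, HasGradientAt (fun w => (1 / 2) * nrm w ^ 2) (gradh u) u)
    (u d : EuclideanSpace ℝ (Fin N)) :
    (1 / 2) * nrm u ^ 2 + ⟪gradh u, d⟫ ≤ (1 / 2) * nrm (u + d) ^ 2 := by
  have hc : ConvexOn ℝ Set.univ (fun s : ℝ => (1 / 2) * nrm (u + s • d) ^ 2) := by
    have := (halfSq_convexOn hnonneg hhom htri).comp_affineMap (AffineMap.lineMap u (u + d))
    simpa [Function.comp_def, AffineMap.lineMap_apply, add_comm] using this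
  have hd := hasDerivAt_line hgradh u d 0
  have := hc.le_slope_of_hasDerivAt (Set.mem_univ 0) (Set.mem_univ 1) one_pos hd
  simp [slope_def_field] at this
  linarith

/-- The Hölder form of the Lipschitz hypothesis. The real `sSup` is meaningful here because the
gradient inequality bounds `⟪w, ∇h u - ∇h v⟫` over the unit ball. -/
lemma inner_gradh_sub_le (hnonneg : ∀ u, 0 ≤ nrm u)
    (hdefinite : ∀ u, nrm u = 0 → u = 0)
    (hhom : ∀ (c : ℝ) u, nrm (c • u) = |c| * nrm u)
    (htri : ∀ u v, nrm (u + v) ≤ nrm u + nrm v)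
    (hgradh : ∀ u, HasGradientAt (fun w => (1 / 2) * nrm w ^ 2) (gradh u) u)
    (hLip : ∀ u v, sSup {r : ℝ | ∃ w, nrm w ≤ 1 ∧ r = ⟪w, gradh u - gradh v⟫}
      ≤ nrm (u - v))
    (u v d : EuclideanSpace ℝ (Fin N)) :
    ⟪gradh u - gradh v, d⟫ ≤ nrm (u - v) * nrm d := by
  have hbound : ∀ a w : EuclideanSpace ℝ (Fin N), nrm w ≤ 1 →
      ⟪gradh a, w⟫ ≤ (1 / 2) * (nrm a + 1) ^ 2 := by
    intro a w hw
    have h1 := halfSq_gradient_inequality hnonneg hhom htri hgradh a w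
    have h2 : nrm (a + w) ^ 2 ≤ (nrm a + 1) ^ 2 :=
      pow_le_pow_left₀ (hnonneg _) ((htri a w).trans (by linarith)) 2
    nlinarith [sq_nonneg (nrm a)]
  have hbdd : BddAbove {r : ℝ | ∃ w, nrm w ≤ 1 ∧ r = ⟪w, gradh u - gradh v⟫} := by
    refine ⟨(1 / 2) * (nrm u + 1) ^ 2 + (1 / 2) * (nrm v + 1) ^ 2, ?_⟩
    rintro r ⟨w, hw, rfl⟩
    have hw' : nrm (-w) ≤ 1 := by
      have := hhom (-1) w
      simp only [neg_smul, one_smul, abs_neg, abs_one, one_mul] at this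
      rwa [this]
    have h1 := hbound u w hw
    have h2 := hbound v (-w) hw'
    rw [inner_neg_right] at h2
    rw [real_inner_comm, inner_sub_left]
    linarith
  rcases (hnonneg d).eq_or_lt with h0 | hpos
  · rw [hdefinite d h0.symm, inner_zero_right]
    exact mul_nonneg (hnonneg _) (hnonneg _)
  · have hunit : nrm ((nrm d)⁻¹ • d) ≤ 1 := by
      rw [hhom, abs_of_pos (inv_pos.mpr hpos), inv_mul_cancel₀ hpos.ne']
    have h1 := (le_csSup hbdd ⟨_, hunit, rfl⟩).trans (hLip u v)
    rw [real_inner_smul_left, inv_mul_le_iff₀ hpos, real_inner_comm] at h1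
    linarith

/-- The descent inequality: the derivative of
`s ↦ h (u + s d) - s ⟪∇h u, d⟫ - s² ‖d‖²/2` is nonpositive on `[0, 1]`. -/
lemma halfSq_descent (hnonneg : ∀ u, 0 ≤ nrm u)
    (hdefinite : ∀ u, nrm u = 0 → u = 0)
    (hhom : ∀ (c : ℝ) u, nrm (c • u) = |c| * nrm u)
    (htri : ∀ u v, nrm (u + v) ≤ nrm u + nrm v)
    (hgradh : ∀ u, HasGradientAt (fun w => (1 / 2) * nrm w ^ 2) (gradh u) u)
    (hLip : ∀ u v, sSup {r : ℝ | ∃ w, nrm w ≤ 1 ∧ r = ⟪w, gradh u - gradh v⟫}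
      ≤ nrm (u - v))
    (u d : EuclideanSpace ℝ (Fin N)) :
    (1 / 2) * nrm (u + d) ^ 2
      ≤ (1 / 2) * nrm u ^ 2 + ⟪gradh u, d⟫ + (1 / 2) * nrm d ^ 2 := by
  have hder : ∀ s : ℝ, HasDerivAt
      (fun s : ℝ => (1 / 2) * nrm (u + s • d) ^ 2 - s * ⟪gradh u, d⟫
        - s ^ 2 * ((1 / 2) * nrm d ^ 2))
      (⟪gradh (u + s • d), d⟫ - ⟪gradh u, d⟫ - s * nrm d ^ 2) s := by
    intro s
    have h1 := hasDerivAt_line hgradh u d s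
    have h2 := (hasDerivAt_id s).mul_const ⟪gradh u, d⟫
    have h3 := ((hasDerivAt_id s).pow 2).mul_const ((1 / 2) * nrm d ^ 2)
    refine ((h1.sub h2).sub h3).congr_deriv ?_
    simp
    ring
  have hanti := antitoneOn_of_deriv_nonpos (convex_Icc (0 : ℝ) 1)
    (fun s _ => (hder s).continuousAt.continuousWithinAt)
    (fun s _ => (hder s).differentiableAt.differentiableWithinAt)
    (fun s hs => by
      rw [interior_Icc] at hs
      rw [(hder s).deriv]
      have h := inner_gradh_sub_le hnonneg hdefinite hhom htri hgradh hLip (u + s • d) u d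
      rw [add_sub_cancel_left, hhom, abs_of_pos hs.1, inner_sub_left] at h
      nlinarith)
  have h := hanti (Set.left_mem_Icc.mpr zero_le_one) (Set.right_mem_Icc.mpr zero_le_one)
    zero_le_one
  simp at h
  linarith

end Aux

/-- Frank–Wolfe on the squared-norm objective `D(x) = (1/2)‖x - p‖²`
(for a norm `nrm` whose half-square is differentiable with 1-Lipschitz gradient in the
dual norm) over a convex compact set of diameter `R`, with step sizes `γ^t = 2/(t+1)`,
satisfies `‖x^T - p‖² ≤ min_{x∈X} ‖x - p‖² + 8R²/T` and hence
`‖x^T - p‖ - min_{x∈X} ‖x - p‖ ≤ 2√2 R/√T` for `T ≥ 4`. -/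
theorem frankWolfe_squared_norm_convergence {N : ℕ}
    (nrm : EuclideanSpace ℝ (Fin N) → ℝ)
    (hnonneg : ∀ u, 0 ≤ nrm u)
    (hdefinite : ∀ u, nrm u = 0 → u = 0)
    (hhom : ∀ (c : ℝ) u, nrm (c • u) = |c| * nrm u)
    (htri : ∀ u v, nrm (u + v) ≤ nrm u + nrm v)
    (gradh : EuclideanSpace ℝ (Fin N) → EuclideanSpace ℝ (Fin N))
    (hgradh : ∀ u, HasGradientAt (fun w => (1 / 2) * nrm w ^ 2) (gradh u) u)
    (hLip : ∀ u v, sSup {r : ℝ | ∃ w, nrm w ≤ 1 ∧ r = ⟪w, gradh u - gradh v⟫}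
      ≤ nrm (u - v))
    (X : Set (EuclideanSpace ℝ (Fin N))) (hXconv : Convex ℝ X) (hXcomp : IsCompact X)
    (R : ℝ) (hR : IsGreatest {r : ℝ | ∃ x ∈ X, ∃ x' ∈ X, r = nrm (x - x')} R)
    (p : EuclideanSpace ℝ (Fin N))
    (gradD : EuclideanSpace ℝ (Fin N) → EuclideanSpace ℝ (Fin N))
    (hgradD : ∀ u, HasGradientAt (fun w => (1 / 2) * nrm (w - p) ^ 2) (gradD u) u)
    (x z : ℕ → EuclideanSpace ℝ (Fin N)) (hx1 : x 1 ∈ X)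
    (hz : ∀ t : ℕ, 1 ≤ t → z t ∈ X ∧ ∀ w ∈ X, ⟪gradD (x t), z t⟫ ≤ ⟪gradD (x t), w⟫)
    (hstep : ∀ t : ℕ, 1 ≤ t →
      x (t + 1) = (1 - 2 / ((t : ℝ) + 1)) • x t + (2 / ((t : ℝ) + 1)) • z t) :
    ∀ T : ℕ, 4 ≤ T → ∀ xstar ∈ X,
      nrm (x T - p) ^ 2 ≤ nrm (xstar - p) ^ 2 + 8 * R ^ 2 / (T : ℝ)
      ∧ nrm (x T - p) - nrm (xstar - p) ≤ 2 * Real.sqrt 2 * R / Real.sqrt (T : ℝ) := by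
  have hR0 : 0 ≤ R := by
    obtain ⟨a, _, b, _, h⟩ := hR.1
    exact h ▸ hnonneg _
  have hgD : ∀ u, gradD u = gradh (u - p) := by
    intro u
    refine (hgradD u).unique ?_
    have h1 := (hgradh (u - p)).hasFDerivAt.comp u ((hasFDerivAt_id u).sub_const p)
    rw [hasGradientAt_iff_hasFDerivAt]
    exact h1
  have hγ : ∀ t : ℕ, 1 ≤ t → 0 ≤ 1 - 2 / ((t : ℝ) + 1) := by
    intro t ht
    have : (1 : ℝ) ≤ t := by exact_mod_cast ht
    rw [sub_nonneg, div_le_one (by positivity)]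
    linarith
  have hxX : ∀ t : ℕ, 1 ≤ t → x t ∈ X := by
    intro t ht
    induction t, ht using Nat.le_induction with
    | base => exact hx1
    | succ t ht ih =>
      rw [hstep t ht]
      exact hXconv ih (hz t ht).1 (hγ t ht) (by positivity) (by ring)
  intro T hT xstar hxs
  have hrec : ∀ t : ℕ, 1 ≤ t →
      (1 / 2) * nrm (x (t + 1) - p) ^ 2 - (1 / 2) * nrm (xstar - p) ^ 2
        ≤ (1 - 2 / ((t : ℝ) + 1)) *
            ((1 / 2) * nrm (x t - p) ^ 2 - (1 / 2) * nrm (xstar - p) ^ 2)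
          + (2 / ((t : ℝ) + 1)) ^ 2 * ((1 / 2) * R ^ 2) := by
    intro t ht
    have hstep' := hstep t ht
    have hγ0 : 0 ≤ 2 / ((t : ℝ) + 1) := by positivity
    generalize 2 / ((t : ℝ) + 1) = γ at hstep' hγ0 ⊢
    have hd := halfSq_descent hnonneg hdefinite hhom htri hgradh hLip
      (x t - p) (γ • (z t - x t))
    have hc := halfSq_gradient_inequality hnonneg hhom htri hgradh
      (x t - p) (xstar - x t)
    have hm := (hz t ht).2 xstar hxs
    have hdiam : nrm (z t - x t) ≤ R := hR.2 ⟨_, (hz t ht).1, _, hxX t ht, rfl⟩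
    have hdiam2 : nrm (z t - x t) ^ 2 ≤ R ^ 2 := pow_le_pow_left₀ (hnonneg _) hdiam 2
    have e1 : x t - p + γ • (z t - x t) = x (t + 1) - p := by
      rw [hstep']
      module
    have e2 : x t - p + (xstar - x t) = xstar - p := by abel
    rw [e1, hhom, abs_of_nonneg hγ0, inner_smul_right, inner_sub_right] at hd
    rw [e2, inner_sub_right] at hc
    rw [hgD] at hm
    nlinarith [mul_le_mul_of_nonneg_left hdiam2 (sq_nonneg γ),
      mul_le_mul_of_nonneg_left hc hγ0, mul_le_mul_of_nonneg_left hm hγ0]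
  have hgap : ∀ t : ℕ, 2 ≤ t →
      (1 / 2) * nrm (x t - p) ^ 2 - (1 / 2) * nrm (xstar - p) ^ 2
        ≤ 2 * R ^ 2 / ((t : ℝ) + 1) := by
    intro t ht
    induction t, ht using Nat.le_induction with
    | base =>
      have h := hrec 1 le_rfl
      norm_num at h ⊢
      nlinarith [sq_nonneg R]
    | succ t ht ih =>
      refine (hrec t (by omega)).trans ?_
      have h := mul_le_mul_of_nonneg_left ih (hγ t (by omega))
      have ht0 : (0 : ℝ) < (t : ℝ) + 1 := by positivity
      -- The recursion gives `2R² t/(t+1)²`, and `t (t+2) ≤ (t+1)²`.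
      have key : (1 - 2 / ((t : ℝ) + 1)) * (2 * R ^ 2 / ((t : ℝ) + 1))
          + (2 / ((t : ℝ) + 1)) ^ 2 * ((1 / 2) * R ^ 2)
          = 2 * R ^ 2 * (t / ((t : ℝ) + 1) ^ 2) := by
        field_simp
        ring
      have hfrac : (t : ℝ) / ((t : ℝ) + 1) ^ 2 ≤ 1 / ((t : ℝ) + 1 + 1) := by
        rw [div_le_div_iff₀ (by positivity) (by positivity)]
        nlinarith
      have h' := mul_le_mul_of_nonneg_left hfrac (show 0 ≤ 2 * R ^ 2 by positivity)
      rw [mul_one_div] at h'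
      push_cast
      linarith
  have hT0 : (0 : ℝ) < T := by exact_mod_cast (by omega : 0 < T)
  have hmain : nrm (x T - p) ^ 2 ≤ nrm (xstar - p) ^ 2 + 8 * R ^ 2 / (T : ℝ) := by
    have h1 := hgap T (by omega)
    have h2 : 2 * R ^ 2 / ((T : ℝ) + 1) ≤ 2 * R ^ 2 / (T : ℝ) :=
      div_le_div_of_nonneg_left (by positivity) hT0 (by linarith)
    have h3 : 8 * R ^ 2 / (T : ℝ) = 4 * (2 * R ^ 2 / (T : ℝ)) := by ring
    have h4 : 0 ≤ 2 * R ^ 2 / (T : ℝ) := by positivity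
    linarith
  refine ⟨hmain, ?_⟩
  have hc0 : 0 ≤ 2 * Real.sqrt 2 * R / Real.sqrt (T : ℝ) := by positivity
  have hc2 : (2 * Real.sqrt 2 * R / Real.sqrt (T : ℝ)) ^ 2 = 8 * R ^ 2 / (T : ℝ) := by
    rw [div_pow, mul_pow, mul_pow, Real.sq_sqrt hT0.le, Real.sq_sqrt (by norm_num)]
    ring
  have hle : nrm (x T - p)
      ≤ nrm (xstar - p) + 2 * Real.sqrt 2 * R / Real.sqrt (T : ℝ) := by
    refine (pow_le_pow_iff_left₀ (hnonneg _) (add_nonneg (hnonneg _) hc0) two_ne_zero).mp ?_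
    nlinarith [mul_nonneg (hnonneg (xstar - p)) hc0]
  linarith
end

section
/- Let X ⊆ ℝ^N be convex compact, ‖·‖ a norm on ℝ^N, G > 0, and Y = { y ∈ ℝ^N : ‖y‖ ≤ G }. For each data vector p' let D(·,p') : ℝ^N → ℝ be convex, and let D_*(y,p') := sup_{z∈ℝ^N} ( ⟨y,z⟩ − D(z,p') ) be its convex conjugate. Assume: (i) D(x,p) = sup_{y∈Y} ( ⟨x,y⟩ − D_*(y,p) ) for all x ∈ X; and (ii) there exist constants L_D, L_{D,*} ∈ [0,∞) such that min_{x∈X} D(x,p') − min_{x∈X} D(x,p'') ≤ L_D·D(p',p'') for all p',p'', and D_*(y,p') − D_*(y,p'') ≤ L_{D,*}·D(p',p'') for all y ∈ Y and all p',p''. Given a sequence y^1,…,y^T ∈ Y and data p^1,…,p^T, define z^t ∈ argmin_{z∈X} ⟨z, y^t⟩, f^t(y) := ⟨z^t, y⟩ − D_*(y,p^t), and x^T := (1/T) Σ_{t=1}^T z^t. Then: D(x^T, p) − min_{x∈X} D(x,p) ≤ max_{y∈Y} (1/T) Σ_{t=1}^T f^t(y) − (1/T) Σ_{t=1}^T f^t(y^t)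 + ((L_D + L_{D,*})/T) Σ_{t=1}^T D(p^t, p). -/
/-!
By Fenchel–Young, `⟨x, y⟩ - D_*(y, p') ≤ D(x, p')` for `y ∈ Y`. Minimizing over `x ∈ X` gives
`f^t(y^t) ≤ min_X D(·, p^t) ≤ min_X D(·, p) + L_D D(p^t, p)`, which bounds the average of
`f^t(y^t)`. On the other side, by linearity and the Lipschitz property of `D_*`, each term
`⟨x^T, y⟩ - D_*(y, p)` of the supremum representing `D(x^T, p)` is at most the average of the
`f^t(y)` plus `L_{D,*}` times the average of `D(p^t, p)`. Subtracting the two bounds gives the claim.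
-/

open Matrix Finset

/-- error bound for the dual (regret-minimization) approach
(Theorem 3 of the paper).  `nrm` is a norm on `ℝ^N`, `Y = {y : nrm y ≤ G}`,
`Dstar (·, p')` is the convex conjugate of `D (·, p')` (captured on `Y` by `hDstar`),
assumption (i) is `hbiconj`, assumption (ii) is `hLipmin` and `hLipstar`, the dual
iterates are `yseq`, the associated primal points are `z t ∈ argmin_{z ∈ X} ⟨z, y^t⟩`,
and `xT` is their average. -/
theorem dual_approach_error_bound {N : ℕ}
    (X : Set (Fin N → ℝ)) (hXne : X.Nonempty) (hXconv : Convex ℝ X) (hXcomp : IsCompact X)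
    (nrm : (Fin N → ℝ) → ℝ)
    (hnonneg : ∀ u, 0 ≤ nrm u)
    (hdefinite : ∀ u, nrm u = 0 → u = 0)
    (hhom : ∀ (c : ℝ) (u : Fin N → ℝ), nrm (c • u) = |c| * nrm u)
    (htri : ∀ u v : Fin N → ℝ, nrm (u + v) ≤ nrm u + nrm v)
    (G : ℝ) (hG : 0 < G)
    (D : (Fin N → ℝ) → (Fin N → ℝ) → ℝ)
    (hDconv : ∀ p', ConvexOn ℝ Set.univ fun x => D x p')
    (Dstar : (Fin N → ℝ) → (Fin N → ℝ) → ℝ)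
    (hDstar : ∀ y : Fin N → ℝ, nrm y ≤ G → ∀ p' : Fin N → ℝ,
      IsLUB {r : ℝ | ∃ z : Fin N → ℝ, r = y ⬝ᵥ z - D z p'} (Dstar y p'))
    (p : Fin N → ℝ)
    -- assumption (i): D(x,p) = sup_{y ∈ Y} (⟨x,y⟩ - D_*(y,p)) on X
    (hbiconj : ∀ x ∈ X,
      IsLUB {r : ℝ | ∃ y : Fin N → ℝ, nrm y ≤ G ∧ r = x ⬝ᵥ y - Dstar y p} (D x p))
    -- assumption (ii): Lipschitz-type regularity
    (LD LDs : ℝ) (hLD : 0 ≤ LD) (hLDs : 0 ≤ LDs)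
    (hLipmin : ∀ p' p'' : Fin N → ℝ,
      sInf {r : ℝ | ∃ x ∈ X, r = D x p'} - sInf {r : ℝ | ∃ x ∈ X, r = D x p''}
        ≤ LD * D p' p'')
    (hLipstar : ∀ y : Fin N → ℝ, nrm y ≤ G → ∀ p' p'' : Fin N → ℝ,
      Dstar y p' - Dstar y p'' ≤ LDs * D p' p'')
    (T : ℕ) (hT : 1 ≤ T)
    (yseq pseq z : ℕ → Fin N → ℝ)
    (hy : ∀ t ∈ Finset.Icc 1 T, nrm (yseq t) ≤ G)
    (hz : ∀ t ∈ Finset.Icc 1 T, z t ∈ X ∧ ∀ w ∈ X, z t ⬝ᵥ yseq t ≤ w ⬝ᵥ yseq t)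
    (xT : Fin N → ℝ) (hxT : xT = (1 / (T : ℝ)) • ∑ t ∈ Finset.Icc 1 T, z t) :
    D xT p - sInf {r : ℝ | ∃ x ∈ X, r = D x p} ≤
      sSup {r : ℝ | ∃ y : Fin N → ℝ, nrm y ≤ G ∧
          r = (1 / (T : ℝ)) * ∑ t ∈ Finset.Icc 1 T, (z t ⬝ᵥ y - Dstar y (pseq t))}
        - (1 / (T : ℝ)) * ∑ t ∈ Finset.Icc 1 T, (z t ⬝ᵥ yseq t - Dstar (yseq t) (pseq t))
        + ((LD + LDs) / (T : ℝ)) * ∑ t ∈ Finset.Icc 1 T, D (pseq t) p := by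
  have hTpos : (0 : ℝ) < T := by exact_mod_cast hT
  have hfenchel : ∀ x y p', nrm y ≤ G → x ⬝ᵥ y - Dstar y p' ≤ D x p' := by
    intro x y p' hyG
    have h := (hDstar y hyG p').1 ⟨x, rfl⟩
    rw [dotProduct_comm] at h
    linarith
  have hxX : xT ∈ X := by
    rw [hxT, Finset.smul_sum]
    refine hXconv.sum_mem (fun _ _ => by positivity) ?_ (fun t ht => (hz t ht).1)
    have hTne : (T : ℝ) ≠ 0 := ne_of_gt hTpos
    simp [hTne]
  -- Fenchel–Young bounds the set of averages, so its `sSup` is a genuine supremum.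
  have hbdd : BddAbove {r : ℝ | ∃ y : Fin N → ℝ, nrm y ≤ G ∧
      r = (1 / (T : ℝ)) * ∑ t ∈ Finset.Icc 1 T, (z t ⬝ᵥ y - Dstar y (pseq t))} := by
    refine ⟨(1 / (T : ℝ)) * ∑ t ∈ Finset.Icc 1 T, D (z t) (pseq t), ?_⟩
    rintro r ⟨y, hyG, rfl⟩
    exact mul_le_mul_of_nonneg_left
      (Finset.sum_le_sum fun t _ => hfenchel _ _ _ hyG) (by positivity)
  have hupper : D xT p ≤ sSup {r : ℝ | ∃ y : Fin N → ℝ, nrm y ≤ G ∧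
      r = (1 / (T : ℝ)) * ∑ t ∈ Finset.Icc 1 T, (z t ⬝ᵥ y - Dstar y (pseq t))}
        + (1 / (T : ℝ)) * (LDs * ∑ t ∈ Finset.Icc 1 T, D (pseq t) p) := by
    refine (hbiconj xT hxX).2 ?_
    rintro r ⟨y, hyG, rfl⟩
    have h1 := le_csSup hbdd ⟨y, hyG, rfl⟩
    have h2 : ∑ t ∈ Finset.Icc 1 T, (z t ⬝ᵥ y - Dstar y p) ≤
        ∑ t ∈ Finset.Icc 1 T, (z t ⬝ᵥ y - Dstar y (pseq t))
          + LDs * ∑ t ∈ Finset.Icc 1 T, D (pseq t) p := by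
      rw [Finset.mul_sum, ← Finset.sum_add_distrib]
      refine Finset.sum_le_sum fun t _ => ?_
      linarith [hLipstar y hyG (pseq t) p]
    have h3 : xT ⬝ᵥ y - Dstar y p =
        (1 / (T : ℝ)) * ∑ t ∈ Finset.Icc 1 T, (z t ⬝ᵥ y - Dstar y p) := by
      rw [hxT, smul_dotProduct, sum_dotProduct, Finset.sum_sub_distrib, smul_eq_mul]
      simp only [Finset.sum_const, Nat.card_Icc, nsmul_eq_mul, Nat.add_sub_cancel]
      field_simp
    have h4 := mul_le_mul_of_nonneg_left h2 (by positivity : (0 : ℝ) ≤ 1 / T)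
    rw [mul_add] at h4
    linarith
  have hlower : (1 / (T : ℝ)) *
      ∑ t ∈ Finset.Icc 1 T, (z t ⬝ᵥ yseq t - Dstar (yseq t) (pseq t)) ≤
      sInf {r : ℝ | ∃ x ∈ X, r = D x p}
        + (1 / (T : ℝ)) * (LD * ∑ t ∈ Finset.Icc 1 T, D (pseq t) p) := by
    have h1 : ∑ t ∈ Finset.Icc 1 T, (z t ⬝ᵥ yseq t - Dstar (yseq t) (pseq t)) ≤
        ∑ t ∈ Finset.Icc 1 T, (sInf {r : ℝ | ∃ x ∈ X, r = D x p} + LD * D (pseq t) p) := by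
      refine Finset.sum_le_sum fun t ht => ?_
      have h2 : z t ⬝ᵥ yseq t - Dstar (yseq t) (pseq t) ≤
          sInf {r : ℝ | ∃ x ∈ X, r = D x (pseq t)} := by
        obtain ⟨x₀, hx₀⟩ := hXne
        refine le_csInf ⟨_, x₀, hx₀, rfl⟩ ?_
        rintro r ⟨x, hx, rfl⟩
        linarith [(hz t ht).2 x hx, hfenchel x (yseq t) (pseq t) (hy t ht)]
      linarith [hLipmin (pseq t) p]
    have h4 := mul_le_mul_of_nonneg_left h1 (by positivity : (0 : ℝ) ≤ 1 / T)
    rw [Finset.sum_add_distrib, ← Finset.mul_sum, mul_add] at h4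
    simp only [Finset.sum_const, Nat.card_Icc, nsmul_eq_mul, Nat.add_sub_cancel] at h4
    rwa [← mul_assoc (1 / (T : ℝ)) (T : ℝ), one_div_mul_cancel hTpos.ne', one_mul] at h4
  have hsplit : ((LD + LDs) / (T : ℝ)) * ∑ t ∈ Finset.Icc 1 T, D (pseq t) p =
      (1 / (T : ℝ)) * (LD * ∑ t ∈ Finset.Icc 1 T, D (pseq t) p)
        + (1 / (T : ℝ)) * (LDs * ∑ t ∈ Finset.Icc 1 T, D (pseq t) p) := by ring
  linarith
end
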